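/- Let E₂(q) = 1 − 24 Σ_{n=1}^∞ σ₁(n) qⁿ. Then for every complex number q with |q| < 1, one has Σ_{a≥0, b≥0} (−1)^b (2a+1) q^{(b+1)(b+2a+2)/2} = ( 1 − E₂(q) ) / 24, where the exponent (b+1)(b+2a+2)/2 is always a positive integer. -/

import Mathlib

open scoped BigOperators

/-- The weight-2 Eisenstein series `E₂(q) = 1 − 24 Σ_{n=1}^∞ σ₁(n) qⁿ`. -/
noncomputable def E2 (q : ℂ) : ℂ :=
  1 - 24 * ∑' n : ℕ, (ArithmeticFunction.sigma 1 (n + 1) : ℂ) * q ^ (n + 1)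

/-!
The pair `{b + 1, b + 2a + 2}` consists of an odd number `d` and an even number `2e`, and
`(-1)^b (2a + 1) = 2e - d`. So the double series is `∑ (2e - d) q^(de)` over odd `d ≥ 1` and all
`e ≥ 1`. Without the parity condition, the symmetry of `q^(de)` turns this sum into
`∑ d q^(de) = ∑ σ₁(n) q^n`. The terms with `d = 2d'` even contribute `2 ∑ (e - d') (q²)^(d'e)`,
which vanishes by the same symmetry.
-/

open ArithmeticFunction (sigma)
open Set (range)

section HasSum

variable {α β γ G : Type*} [AddCommGroup G] [TopologicalSpace G] [IsTopologicalAddGroup G]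

lemma hasSum_comp_of_isCompl_range {f : α → G} {i : β → α} {j : γ → α} {s t : G}
    (hi : i.Injective) (hj : j.Injective) (hij : IsCompl (range i) (range j))
    (hf : HasSum f s) (hfj : HasSum (f ∘ j) t) : HasSum (f ∘ i) (s - t) := by
  rw [← hi.hasSum_range_iff, ← hij.symm.compl_eq]
  refine (HasSum.hasSum_compl_iff (hj.hasSum_range_iff.2 hfj)).2 ?_
  rwa [add_sub_cancel]

lemma hasSum_even_fst_of_odd_fst {f : ℕ × β → G} {s t : G} (hf : HasSum f s)
    (hodd : HasSum (fun p : ℕ × β ↦ f (2 * p.1 + 1, p.2)) t) :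
    HasSum (fun p : ℕ × β ↦ f (2 * p.1, p.2)) (s - t) := by
  have hrange : range (Prod.map (2 * · + 1) id : ℕ × β → ℕ × β) =
      (range (Prod.map (2 * ·) id : ℕ × β → ℕ × β))ᶜ := by
    ext ⟨n, b⟩
    simp [Set.range_prodMap]
  exact hasSum_comp_of_isCompl_range (i := Prod.map (2 * ·) id) (j := Prod.map (2 * · + 1) id)
    (Function.Injective.prodMap (mul_right_injective₀ two_ne_zero) Function.injective_id)
    (Function.Injective.prodMap (fun _ _ h ↦ by grind) Function.injective_id)
    (hrange ▸ isCompl_compl) hf hodd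

end HasSum

section DivisorSum

lemma sum_divisorsAntidiagonal_pow_mul_pow {R : Type*} [CommSemiring R] (k n : ℕ) (q : R) :
    ∑ d ∈ n.divisorsAntidiagonal, (d.2 : R) ^ k * q ^ (d.1 * d.2) = sigma k n * q ^ n := by
  rw [ArithmeticFunction.sigma_apply, Nat.cast_sum, Finset.sum_mul,
    ← Nat.sum_divisorsAntidiagonal' fun _ e ↦ ((e ^ k : ℕ) : R) * q ^ n]
  refine Finset.sum_congr rfl fun d hd ↦ ?_
  rw [(Nat.mem_divisorsAntidiagonal.1 hd).1, Nat.cast_pow]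

variable {R : Type*} [NormedCommRing R] [CompleteSpace R] {q : R}

lemma summable_prod_natCast_pow_mul_pow (k : ℕ) (hq : ‖q‖ < 1) :
    Summable fun p : ℕ+ × ℕ+ ↦ (p.2 : R) ^ k * q ^ (p.1 * p.2 : ℕ) := by
  have hreal := (summable_prod_mul_pow k (r := ‖q‖) (by rwa [norm_norm])).mul_left ‖(1 : R)‖
  refine .of_norm_bounded hreal fun p ↦ ?_
  calc ‖(p.2 : R) ^ k * q ^ (p.1 * p.2 : ℕ)‖
      ≤ ‖((p.2 ^ k : ℕ) : R)‖ * ‖q ^ (p.1 * p.2 : ℕ)‖ := by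
        rw [Nat.cast_pow]; exact norm_mul_le _ _
    _ ≤ ((p.2 ^ k : ℕ) * ‖(1 : R)‖) * ‖q‖ ^ (p.1 * p.2 : ℕ) := by
        gcongr
        · exact Nat.norm_cast_le _
        · exact norm_pow_le' q (by positivity)
    _ = ‖(1 : R)‖ * ((p.2 : ℝ) ^ k * ‖q‖ ^ (p.1 * p.2 : ℕ)) := by push_cast; ring

lemma hasSum_prod_natCast_pow_mul_pow_sigma (k : ℕ) (hq : ‖q‖ < 1) :
    HasSum (fun p : ℕ+ × ℕ+ ↦ (p.2 : R) ^ k * q ^ (p.1 * p.2 : ℕ))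
      (∑' n : ℕ+, sigma k n * q ^ (n : ℕ)) := by
  have hprod := (summable_prod_natCast_pow_mul_pow k hq).hasSum
  have hfiber (n : ℕ+) : HasSum (fun d : (n : ℕ).divisorsAntidiagonal ↦
      (d.1.2 : R) ^ k * q ^ (d.1.1 * d.1.2)) (sigma k n * q ^ (n : ℕ)) := by
    rw [← sum_divisorsAntidiagonal_pow_mul_pow]
    exact Finset.hasSum _ _
  rwa [((sigmaAntidiagonalEquivProd.hasSum_iff.2 hprod).sigma hfiber).tsum_eq]

lemma hasSum_prod_succ_mul_pow_sigma (hq : ‖q‖ < 1) :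
    HasSum (fun p : ℕ × ℕ ↦ (p.2 + 1 : R) * q ^ ((p.1 + 1) * (p.2 + 1)))
      (∑' n : ℕ, sigma 1 (n + 1) * q ^ (n + 1)) := by
  have h := hasSum_prod_natCast_pow_mul_pow_sigma 1 hq
  rw [tsum_pnat_eq_tsum_succ (f := fun n ↦ (sigma 1 n : R) * q ^ n),
    ← (Equiv.pnatEquivNat.symm.prodCongr Equiv.pnatEquivNat.symm).hasSum_iff] at h
  simpa [Function.comp_def] using h

end DivisorSum

section OddDivisors

variable {R : Type*} [CommRing R] [TopologicalSpace R] {q s t : R}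

lemma hasSum_succ_fst_mul_pow
    (h : HasSum (fun p : ℕ × ℕ ↦ (p.2 + 1 : R) * q ^ ((p.1 + 1) * (p.2 + 1))) s) :
    HasSum (fun p : ℕ × ℕ ↦ (p.1 + 1 : R) * q ^ ((p.1 + 1) * (p.2 + 1))) s := by
  simpa only [Function.comp_def, Equiv.prodComm_apply, Prod.fst_swap, Prod.snd_swap, mul_comm]
    using (Equiv.prodComm ℕ ℕ).hasSum_iff.2 h

variable [IsTopologicalRing R]

lemma hasSum_two_mul_sub_mul_pow_of_odd
    (h : HasSum (fun p : ℕ × ℕ ↦ (p.2 + 1 : R) * q ^ ((p.1 + 1) * (p.2 + 1))) s)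
    (hsq : HasSum (fun p : ℕ × ℕ ↦ (p.2 + 1 : R) * (q ^ 2) ^ ((p.1 + 1) * (p.2 + 1))) t) :
    HasSum (fun p : ℕ × ℕ ↦
      (2 * (p.2 + 1) - (2 * p.1 + 1) : R) * q ^ ((2 * p.1 + 1) * (p.2 + 1))) s := by
  let f (p : ℕ × ℕ) : R := (2 * (p.2 + 1) - (p.1 + 1)) * q ^ ((p.1 + 1) * (p.2 + 1))
  have hf : HasSum f s := by
    simpa only [f, sub_mul, mul_assoc, two_mul, add_mul, add_sub_cancel_right] using
      (h.mul_left 2).sub (hasSum_succ_fst_mul_pow h)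
  have hf_even (p : ℕ × ℕ) : f (2 * p.1 + 1, p.2) =
      2 * ((p.2 + 1 : R) * (q ^ 2) ^ ((p.1 + 1) * (p.2 + 1)) -
        (p.1 + 1 : R) * (q ^ 2) ^ ((p.1 + 1) * (p.2 + 1))) := by
    simp only [f, ← pow_mul]
    push_cast
    ring
  have heven : HasSum (fun p : ℕ × ℕ ↦ f (2 * p.1 + 1, p.2)) 0 := by
    simpa only [hf_even, sub_self, mul_zero] using
      (hsq.sub (hasSum_succ_fst_mul_pow hsq)).mul_left 2
  simpa only [f, Nat.cast_mul, Nat.cast_ofNat, sub_zero] using hasSum_even_fst_of_odd_fst hf heven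

end OddDivisors

/-- The reindexing `(a, b) ↦ (k, j)` of the double series by the pairs `(d, e) = (2k + 1, j + 1)`
with `d` odd. It is characterized by `{b + 1, b + 2a + 2} = {d, 2e}`, where `d` is the smaller
element if `b` is even and the larger one if `b` is odd. -/
def oddEvenPairEquiv : ℕ × ℕ ≃ ℕ × ℕ where
  toFun p := if Even p.2 then (p.2 / 2, p.2 / 2 + p.1) else (p.2 / 2 + p.1 + 1, p.2 / 2)
  invFun p := if p.1 ≤ p.2 then (p.2 - p.1, 2 * p.1) else (p.1 - p.2 - 1, 2 * p.2 + 1)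
  left_inv p := by grind
  right_inv p := by grind

lemma oddEvenPairEquiv_two_mul (a m : ℕ) : oddEvenPairEquiv (a, 2 * m) = (m, m + a) := by
  simp [oddEvenPairEquiv]

lemma oddEvenPairEquiv_two_mul_add_one (a m : ℕ) :
    oddEvenPairEquiv (a, 2 * m + 1) = (m + a + 1, m) := by
  have hhalf : (2 * m + 1) / 2 = m := by omega
  simp [oddEvenPairEquiv, hhalf]

lemma neg_one_pow_mul_two_mul_add_one_eq {R : Type*} [CommRing R] (p : ℕ × ℕ) :
    (-1 : R) ^ p.2 * (2 * p.1 + 1) =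
      2 * ((oddEvenPairEquiv p).2 + 1) - (2 * (oddEvenPairEquiv p).1 + 1) := by
  obtain ⟨a, b⟩ := p
  obtain ⟨m, rfl | rfl⟩ := b.even_or_odd'
  · rw [oddEvenPairEquiv_two_mul, (even_two_mul m).neg_one_pow]
    push_cast
    ring
  · rw [oddEvenPairEquiv_two_mul_add_one, (odd_two_mul_add_one m).neg_one_pow]
    push_cast
    ring

lemma succ_mul_add_two_div_two_eq (p : ℕ × ℕ) :
    (p.2 + 1) * (p.2 + 2 * p.1 + 2) / 2 =
      (2 * (oddEvenPairEquiv p).1 + 1) * ((oddEvenPairEquiv p).2 + 1) := by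
  obtain ⟨a, b⟩ := p
  refine Nat.div_eq_of_eq_mul_left two_pos ?_
  obtain ⟨m, rfl | rfl⟩ := b.even_or_odd'
  · rw [oddEvenPairEquiv_two_mul]
    ring
  · rw [oddEvenPairEquiv_two_mul_add_one]
    ring

theorem sum_eq_one_sub_E2_div_24_general {R : Type*} [NormedCommRing R] [CompleteSpace R]
    {q : R} (hq : ‖q‖ < 1) :
    HasSum (fun p : ℕ × ℕ ↦
        (-1 : R) ^ p.2 * (2 * p.1 + 1) * q ^ ((p.2 + 1) * (p.2 + 2 * p.1 + 2) / 2))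
      (∑' n : ℕ, sigma 1 (n + 1) * q ^ (n + 1)) := by
  have hq_sq : ‖q ^ 2‖ < 1 :=
    (norm_pow_le' q two_pos).trans_lt (pow_lt_one₀ (norm_nonneg q) hq two_ne_zero)
  have h := hasSum_two_mul_sub_mul_pow_of_odd (hasSum_prod_succ_mul_pow_sigma hq)
    (hasSum_prod_succ_mul_pow_sigma hq_sq)
  simpa only [neg_one_pow_mul_two_mul_add_one_eq, succ_mul_add_two_div_two_eq,
    Function.comp_def] using oddEvenPairEquiv.hasSum_iff.2 h

/-- `Σ_{a,b≥0} (−1)^b (2a+1) q^{(b+1)(b+2a+2)/2} = (1 − E₂(q))/24`;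
the exponent `(b+1)(b+2a+2)/2` is an exact natural-number division. -/
theorem sum_eq_one_sub_E2_div_24 (q : ℂ) (hq : ‖q‖ < 1) :
    (∑' p : ℕ × ℕ,
        (-1 : ℂ) ^ p.2 * (2 * (p.1 : ℂ) + 1) * q ^ ((p.2 + 1) * (p.2 + 2 * p.1 + 2) / 2))
      = (1 - E2 q) / 24 := by
  rw [(sum_eq_one_sub_E2_div_24_general hq).tsum_eq, E2]
  ring
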